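/- arXiv:2103.15712 — 2 statements merged into one kernel-verified Lean document; each statement's English description precedes it below -/
import Mathlib

section
/- Let m, d ∈ ℕ with m ≥ d ≥ 2 and N = m^d. Let P be a jittered sampling point set of N points in [0,1)^d. Then E[D*(P)] ≤ 60.9984 · √(d·m^d) · (√(ln(4e·m/d)) + 2.9599) / √(m/d). -/
open MeasureTheory ProbabilityTheory Real

noncomputable section

/-- The axis-aligned cube `∏_i [x_i/m, x_i/m + 1/m)` of the `m`-grid partition of `[0,1)^d`. -/
def jitterCube (m d : ℕ) (x : Fin d → Fin m) : Set (Fin d → ℝ) :=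
  Set.univ.pi fun i => Set.Ico ((x i : ℝ) / m) ((x i : ℝ) / m + 1 / m)

/-- The distribution of a jittered sampling point configuration: independently, one point
uniformly distributed in each of the `m^d` cubes. -/
def jitterMeasure (m d : ℕ) : Measure ((Fin d → Fin m) → (Fin d → ℝ)) :=
  Measure.pi fun x => ((m : ENNReal) ^ d) • volume.restrict (jitterCube m d x)

open scoped Classical in
/-- Signed (non-normalized) discrepancy `|P ∩ A| - N·λ(A)` with `N = m^d` of a point
configuration `P`. -/
def jdisc (m d : ℕ) (P : (Fin d → Fin m) → (Fin d → ℝ)) (A : Set (Fin d → ℝ)) : ℝ :=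
  ((Finset.univ.filter fun x => P x ∈ A).card : ℝ) - (m : ℝ) ^ d * (volume A).toReal

/-- The anchored box `[0,y) = ∏_i [0, y_i)`. -/
def anchoredBox (d : ℕ) (y : Fin d → ℝ) : Set (Fin d → ℝ) :=
  Set.univ.pi fun i => Set.Ico 0 (y i)

/-- The (non-normalized) star discrepancy `D*(P) = sup_{y ∈ [0,1)^d} |disc([0,y))|`. -/
def starDisc (m d : ℕ) (P : (Fin d → Fin m) → (Fin d → ℝ)) : ℝ :=
  ⨆ y : {y : Fin d → ℝ // ∀ i, y i ∈ Set.Ico (0 : ℝ) 1}, |jdisc m d P (anchoredBox d y.1)|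

/-- The expected star discrepancy of a jittered sampling point set of `m^d` points. -/
def expStarDisc (m d : ℕ) : ℝ :=
  ∫ P, starDisc m d P ∂(jitterMeasure m d)

lemma js_card (d M : ℕ) (hd : 1 ≤ d) (hM : 1 ≤ M) :
    ((((Fintype.piFinset fun _ : Fin d => Finset.range (M + 1)).filter
      fun a => ∑ i, a i ≤ M).card : ℕ) : ℝ) ≤ (Real.exp 1 * (1 + (M : ℝ) / d)) ^ d := by
  set T := (Fintype.piFinset fun _ : Fin d => Finset.range (M + 1)) with hT
  set S := T.filter fun a => ∑ i, a i ≤ M with hS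
  have hd' : (0 : ℝ) < d := by exact_mod_cast hd
  have hM' : (0 : ℝ) < M := by exact_mod_cast hM
  set x : ℝ := (M : ℝ) / (M + d) with hx
  have hx0 : 0 < x := by positivity
  have hx1 : x < 1 := by rw [hx, div_lt_one (by positivity)]; linarith
  have hinv : (1 - x)⁻¹ = 1 + (M : ℝ) / d := by
    have h1 : 1 - x = d / (M + d) := by rw [hx]; field_simp; ring
    rw [h1]; field_simp; ring
  have h1 : (S.card : ℝ) * x ^ M ≤ (1 + (M : ℝ) / d) ^ d := by
    calc (S.card : ℝ) * x ^ M = ∑ a ∈ S, x ^ M := by simp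
      _ ≤ ∑ a ∈ S, ∏ i, x ^ (a i) := by
          apply Finset.sum_le_sum
          intro a ha
          rw [Finset.prod_pow_eq_pow_sum]
          exact pow_le_pow_of_le_one hx0.le hx1.le (Finset.mem_filter.1 ha).2
      _ ≤ ∑ a ∈ T, ∏ i, x ^ (a i) := by
          apply Finset.sum_le_sum_of_subset_of_nonneg (Finset.filter_subset _ _)
          intros; positivity
      _ = ∏ _i : Fin d, ∑ j ∈ Finset.range (M + 1), x ^ j := by
          rw [Finset.prod_univ_sum]
      _ ≤ ∏ _i : Fin d, (1 + (M : ℝ) / d) := by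
          apply Finset.prod_le_prod
          · intros; positivity
          · intros; 
            rw [← hinv, geom_sum_eq hx1.ne, ← neg_div_neg_eq, neg_sub, neg_sub, inv_eq_one_div]
            have : 0 < 1 - x := by linarith
            gcongr
            have : 0 < x ^ (M + 1) := by positivity
            linarith
      _ = _ := by simp
  have h2 : 1 ≤ Real.exp 1 ^ d * x ^ M := by
    have h3 : Real.exp (-(d / M : ℝ)) ≤ x := by
      rw [Real.exp_neg]
      apply inv_le_of_inv_le₀ hx0
      have : x⁻¹ = (d / M : ℝ) + 1 := by rw [hx]; field_simp; ring
      rw [this]; exact Real.add_one_le_exp _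
    have h4 : Real.exp (-(d : ℝ)) ≤ x ^ M := by
      calc Real.exp (-(d : ℝ)) = Real.exp (-(d / M : ℝ)) ^ M := by
            rw [← Real.exp_nat_mul]; congr 1; field_simp
        _ ≤ _ := pow_le_pow_left₀ (Real.exp_pos _).le h3 _
    calc (1 : ℝ) = Real.exp 1 ^ d * Real.exp (-(d : ℝ)) := by
          rw [← Real.exp_nat_mul, ← Real.exp_add]; simp
      _ ≤ _ := by gcongr
  rw [mul_pow]
  calc (S.card : ℝ) ≤ S.card * (Real.exp 1 ^ d * x ^ M) := le_mul_of_one_le_right (by positivity) h2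
    _ = Real.exp 1 ^ d * (S.card * x ^ M) := by ring
    _ ≤ _ := by gcongr

lemma js_cover (d : ℕ) (hd : 2 ≤ d) (δ : ℝ) (h0 : 0 < δ) (h1 : δ ≤ 1) :
    ∃ (S : Finset (Fin d → ℕ)) (z l : (Fin d → ℕ) → Fin d → ℝ),
      (S.card : ℝ) ≤ (Real.exp 1 * (5 / 2 / δ ^ 2)) ^ d ∧
      (∀ a ∈ S, ∀ i, 0 ≤ l a i ∧ l a i ≤ z a i ∧ z a i ≤ 1) ∧
      (∀ a ∈ S, ∏ i, z a i - ∏ i, l a i ≤ δ) ∧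
      ∀ y : Fin d → ℝ, (∀ i, 0 ≤ y i ∧ y i ≤ 1) → ∃ a ∈ S, ∀ i, l a i ≤ y i ∧ y i ≤ z a i := by
  have hd' : (2 : ℝ) ≤ d := by exact_mod_cast hd
  set M := ⌈(d : ℝ) / δ ^ 2⌉₊ with hM
  have hMpos : 0 < (d : ℝ) / δ ^ 2 := by positivity
  have hM1 : 1 ≤ M := Nat.one_le_iff_ne_zero.2 (Nat.ceil_pos.2 hMpos).ne'
  have hMlo : (d : ℝ) / δ ^ 2 ≤ M := Nat.le_ceil _
  have hMhi : (M : ℝ) < d / δ ^ 2 + 1 := Nat.ceil_lt_add_one hMpos.le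
  set q : ℝ := 1 - δ / d with hq
  have hδd : δ / d ≤ 1 / 2 := by
    rw [div_le_div_iff₀ (by linarith) (by norm_num)]; nlinarith
  have hδd0 : 0 < δ / d := by positivity
  have hq0 : 0 < q := by rw [hq]; linarith
  have hq1 : q < 1 := by rw [hq]; linarith
  have hqd : 1 - δ ≤ q ^ d := by
    have := one_add_mul_le_pow (a := -(δ / d)) (by linarith) d
    have e : (d : ℝ) * -(δ / d) = -δ := by field_simp
    rw [e] at this
    rw [hq, sub_eq_add_neg, sub_eq_add_neg]; exact this
  have hqM : q ^ M ≤ δ := by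
    have h3 : q ≤ Real.exp (-(δ / d)) := by
      have := Real.add_one_le_exp (-(δ / d)); rw [hq]; linarith
    calc q ^ M ≤ Real.exp (-(δ / d)) ^ M := pow_le_pow_left₀ hq0.le h3 _
      _ = Real.exp (-(M * (δ / d))) := by rw [← Real.exp_nat_mul]; congr 1; ring
      _ ≤ Real.exp (-(1 / δ)) := by
          apply Real.exp_le_exp.2
          apply neg_le_neg
          calc 1 / δ = (d / δ ^ 2) * (δ / d) := by field_simp
            _ ≤ _ := by gcongr
      _ ≤ δ := by
          rw [Real.exp_neg]
          apply inv_le_of_inv_le₀ h0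
          have := Real.add_one_le_exp (1 / δ)
          rw [← one_div]; linarith
  set T := (Fintype.piFinset fun _ : Fin d => Finset.range (M + 1)) with hT
  set S := T.filter fun a => ∑ i, a i ≤ M with hS
  refine ⟨S, fun a i => q ^ (a i), fun a i => if ∑ i, a i < M then q ^ (a i + 1) else 0, ?_, ?_, ?_, ?_⟩
  · refine (js_card d M (by omega) hM1).trans ?_
    have : 1 + (M : ℝ) / d ≤ 5 / 2 / δ ^ 2 := by
      have hd1 : (M : ℝ) / d ≤ 1 / δ ^ 2 + 1 / 2 := by
        calc (M : ℝ) / d ≤ (d / δ ^ 2 + 1) / d := by gcongr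
          _ = 1 / δ ^ 2 + 1 / d := by field_simp
          _ ≤ _ := by gcongr
      have h5 : 1 ≤ 1 / δ ^ 2 := by
        rw [le_div_iff₀ (by positivity)]; nlinarith
      have h6 : 5 / 2 / δ ^ 2 = 5 / 2 * (1 / δ ^ 2) := by ring
      rw [h6]; linarith
    gcongr
  · intro a _ i
    refine ⟨?_, ?_, pow_le_one₀ hq0.le hq1.le⟩
    · dsimp only; split_ifs <;> positivity
    · dsimp only; split_ifs
      · exact pow_le_pow_of_le_one hq0.le hq1.le (Nat.le_succ _)
      · positivity
  · intro a ha
    dsimp only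
    split_ifs with hlt
    · simp only [pow_succ, Finset.prod_mul_distrib, Finset.prod_const, Finset.card_univ,
        Fintype.card_fin]
      have h7 : ∏ i, q ^ (a i) ≤ 1 := by
        apply Finset.prod_le_one
        · intros; positivity
        · intros; exact pow_le_one₀ hq0.le hq1.le
      have h8 : 0 ≤ ∏ i, q ^ (a i) := by positivity
      nlinarith
    · have hsum : ∑ i, a i = M := le_antisymm (Finset.mem_filter.1 ha).2 (not_lt.1 hlt)
      rw [Finset.prod_pow_eq_pow_sum, hsum]
      have : ∏ _i : Fin d, (0 : ℝ) = 0 := by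
        simp; omega
      rw [this]; linarith
  · intro y hy
    set U := S.filter fun a => ∀ i, y i ≤ q ^ (a i) with hU
    have hne : U.Nonempty := by
      refine ⟨fun _ => 0, ?_⟩
      simp [hU, hS, hT]
      exact fun i => (hy i).2
    obtain ⟨a, haU, hmax⟩ := Finset.exists_max_image U (fun a => ∑ i, a i) hne
    obtain ⟨haS, hay⟩ := Finset.mem_filter.1 haU
    refine ⟨a, haS, fun i => ⟨?_, hay i⟩⟩
    dsimp only
    split_ifs with hlt
    · by_contra hcon
      push Not at hcon
      set b := Function.update a i (a i + 1) with hb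
      have hsumb : ∑ j, b j = ∑ j, a j + 1 := by
        rw [hb, Finset.sum_update_of_mem (Finset.mem_univ i),
          ← Finset.add_sum_erase _ a (Finset.mem_univ i), Finset.sdiff_singleton_eq_erase]
        ring
      have hbU : b ∈ U := by
        refine Finset.mem_filter.2 ⟨Finset.mem_filter.2 ⟨Fintype.mem_piFinset.2 fun j => ?_, ?_⟩, ?_⟩
        · rw [Finset.mem_range]
          have := Finset.single_le_sum (f := b) (fun _ _ => Nat.zero_le _) (Finset.mem_univ j)
          omega
        · omega
        · intro j
          by_cases hj : j = i
          · subst hj; simp [hb]; exact hcon.le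
          · simp [hb, hj]; exact hay j
      have := hmax b hbU
      omega
    · exact (hy i).1

/-- probability weight of a set in a cube -/
def jsP (m d : ℕ) (A : Set (Fin d → ℝ)) (x : Fin d → Fin m) : ℝ :=
  (m : ℝ) ^ d * (volume (A ∩ jitterCube m d x)).toReal

lemma js_cube_vol (m d : ℕ) (hm : 1 ≤ m) (x : Fin d → Fin m) :
    volume (jitterCube m d x) = ((m : ENNReal) ^ d)⁻¹ := by
  have hm' : (0 : ℝ) < m := by exact_mod_cast hm
  rw [jitterCube, Real.volume_pi_Ico]
  simp only [add_sub_cancel_left, Finset.prod_const, Finset.card_univ, Fintype.card_fin]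
  rw [one_div, ENNReal.ofReal_inv_of_pos hm', ENNReal.ofReal_natCast, ENNReal.inv_pow]

lemma js_cube_meas (m d : ℕ) (x : Fin d → Fin m) : MeasurableSet (jitterCube m d x) :=
  MeasurableSet.univ_pi fun _ => measurableSet_Ico

lemma js_prob (m d : ℕ) (hm : 1 ≤ m) (x : Fin d → Fin m) :
    IsProbabilityMeasure (((m : ENNReal) ^ d) • (volume : Measure (Fin d → ℝ)).restrict
      (jitterCube m d x)) := by
  constructor
  rw [Measure.smul_apply, Measure.restrict_apply_univ, js_cube_vol m d hm, smul_eq_mul]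
  apply ENNReal.mul_inv_cancel
  · exact pow_ne_zero _ (by exact_mod_cast (by omega : m ≠ 0))
  · exact ENNReal.pow_ne_top (ENNReal.natCast_ne_top m)

lemma jsP_eq (m d : ℕ) (A : Set (Fin d → ℝ)) (hA : MeasurableSet A) (x : Fin d → Fin m) :
    (((m : ENNReal) ^ d) • (volume : Measure (Fin d → ℝ)).restrict (jitterCube m d x)).real A
      = jsP m d A x := by
  rw [measureReal_def, Measure.smul_apply, Measure.restrict_apply hA, smul_eq_mul,
    ENNReal.toReal_mul, jsP]
  simp

lemma jsP_mem (m d : ℕ) (hm : 1 ≤ m) (A : Set (Fin d → ℝ)) (hA : MeasurableSet A)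
    (x : Fin d → Fin m) : 0 ≤ jsP m d A x ∧ jsP m d A x ≤ 1 := by
  have := js_prob m d hm x
  rw [← jsP_eq m d A hA x]
  exact ⟨measureReal_nonneg, measureReal_le_one⟩

lemma jsP_one (m d : ℕ) (hm : 1 ≤ m) (A : Set (Fin d → ℝ)) (x : Fin d → Fin m)
    (h : jitterCube m d x ⊆ A) : jsP m d A x = 1 := by
  have hm' : (0 : ℝ) < m := by exact_mod_cast hm
  rw [jsP, Set.inter_eq_self_of_subset_right h, js_cube_vol m d hm]
  simp
  field_simp

lemma js_cube_disj (m d : ℕ) (hm : 1 ≤ m) {x y : Fin d → Fin m} (hxy : x ≠ y) :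
    Disjoint (jitterCube m d x) (jitterCube m d y) := by
  have hm' : (0 : ℝ) < m := by exact_mod_cast hm
  rw [Set.disjoint_left]
  intro u hu hv
  apply hxy
  funext i
  have h1 := hu i (Set.mem_univ i)
  have h2 := hv i (Set.mem_univ i)
  simp only [Set.mem_Ico, ← add_div, div_le_iff₀ hm', lt_div_iff₀ hm'] at h1 h2
  have h3 : ((x i : ℕ) : ℝ) < (y i : ℕ) + 1 := by linarith
  have h4 : ((y i : ℕ) : ℝ) < (x i : ℕ) + 1 := by linarith
  norm_cast at h3 h4
  apply Fin.ext
  omega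

lemma js_cube_cover (m d : ℕ) (hm : 1 ≤ m) (u : Fin d → ℝ) (hu : ∀ i, u i ∈ Set.Ico (0 : ℝ) 1) :
    ∃ x, u ∈ jitterCube m d x := by
  have hm' : (0 : ℝ) < m := by exact_mod_cast hm
  have hlt : ∀ i, ⌊u i * m⌋₊ < m := fun i => by
    rw [Nat.floor_lt (mul_nonneg (hu i).1 hm'.le)]
    have := (hu i).2
    nlinarith
  refine ⟨fun i => ⟨⌊u i * m⌋₊, hlt i⟩, fun i _ => ?_⟩
  simp only [Set.mem_Ico, ← add_div, div_le_iff₀ hm', lt_div_iff₀ hm']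
  exact ⟨Nat.floor_le (mul_nonneg (hu i).1 hm'.le), Nat.lt_floor_add_one _⟩

lemma jsP_sum (m d : ℕ) (hm : 1 ≤ m) (A : Set (Fin d → ℝ)) (hA : MeasurableSet A)
    (hsub : ∀ u ∈ A, ∀ i, u i ∈ Set.Ico (0 : ℝ) 1) :
    ∑ x, jsP m d A x = (m : ℝ) ^ d * (volume A).toReal := by
  simp only [jsP]
  rw [← Finset.mul_sum]
  congr 1
  rw [← ENNReal.toReal_sum]
  · congr 1
    have hU : A = ⋃ x ∈ (Finset.univ : Finset (Fin d → Fin m)), A ∩ jitterCube m d x := by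
      ext u
      simp only [Finset.mem_univ, Set.iUnion_true, Set.mem_iUnion, Set.mem_inter_iff]
      constructor
      · intro h
        obtain ⟨x, hx⟩ := js_cube_cover m d hm u (hsub u h)
        exact ⟨x, h, hx⟩
      · rintro ⟨x, h, _⟩; exact h
    conv_rhs => rw [hU]
    rw [measure_biUnion_finset]
    · intro x _ y _ hxy
      exact (js_cube_disj m d hm hxy).mono Set.inter_subset_right Set.inter_subset_right
    · intro x _; exact hA.inter (js_cube_meas m d x)
  · intro x _
    refine ne_top_of_le_ne_top ?_ (measure_mono Set.inter_subset_right)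
    rw [js_cube_vol m d hm]
    simp; omega

lemma js_disc_eq (m d : ℕ) (hm : 1 ≤ m) (A : Set (Fin d → ℝ)) (hA : MeasurableSet A)
    (hsub : ∀ u ∈ A, ∀ i, u i ∈ Set.Ico (0 : ℝ) 1) (P : (Fin d → Fin m) → (Fin d → ℝ)) :
    jdisc m d P A = ∑ x, (A.indicator (fun _ => (1 : ℝ)) (P x) - jsP m d A x) := by
  classical
  rw [Finset.sum_sub_distrib, jsP_sum m d hm A hA hsub, jdisc]
  congr 1
  rw [Finset.card_filter]
  push_cast
  apply Finset.sum_congr rfl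
  intro x _
  simp [Set.indicator_apply]

lemma js_factor (m d : ℕ) (hm : 1 ≤ m) (A : Set (Fin d → ℝ)) (hA : MeasurableSet A) (t : ℝ)
    (ht : |t| ≤ 1) (x : Fin d → Fin m) :
    Integrable (fun u => Real.exp (t * (A.indicator (fun _ => (1 : ℝ)) u - jsP m d A x)))
      (((m : ENNReal) ^ d) • volume.restrict (jitterCube m d x)) ∧
    ∫ u, Real.exp (t * (A.indicator (fun _ => (1 : ℝ)) u - jsP m d A x))
      ∂(((m : ENNReal) ^ d) • volume.restrict (jitterCube m d x)) ≤
      Real.exp (t ^ 2 * (jsP m d A x * (1 - jsP m d A x))) := by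
  have := js_prob m d hm x
  have hp := jsP_eq m d A hA x
  obtain ⟨hp0, hp1⟩ := jsP_mem m d hm A hA x
  set μ := ((m : ENNReal) ^ d) • (volume : Measure (Fin d → ℝ)).restrict (jitterCube m d x) with hμ
  set p := jsP m d A x with hpd
  have hIntg : Integrable (A.indicator (fun _ => (1 : ℝ))) μ :=
    (integrable_const 1).indicator hA
  have hrw : (fun u => Real.exp (t * (A.indicator (fun _ => (1 : ℝ)) u - p))) =
      fun u => Real.exp (-(t * p)) + (Real.exp (t * (1 - p)) - Real.exp (-(t * p))) *
        A.indicator (fun _ => (1 : ℝ)) u := by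
    funext u
    by_cases hu : u ∈ A
    · simp [hu]
    · simp [hu]
  rw [hrw]
  refine ⟨(integrable_const _).add (hIntg.const_mul _), ?_⟩
  rw [integral_add (integrable_const _) (hIntg.const_mul _), integral_const_mul,
    integral_indicator_const _ hA, hp]
  simp only [integral_const, probReal_univ, smul_eq_mul, one_mul, mul_one]
  have ht' := abs_le.1 ht
  have b1 := (abs_le.1 (Real.abs_exp_sub_one_sub_id_le (x := t * (1 - p)) (by
    rw [abs_mul, abs_of_nonneg (by linarith : 0 ≤ 1 - p)]
    nlinarith [abs_nonneg t]))).2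
  have b2 := (abs_le.1 (Real.abs_exp_sub_one_sub_id_le (x := -(t * p)) (by
    rw [abs_neg, abs_mul, abs_of_nonneg hp0]
    nlinarith [abs_nonneg t]))).2
  have b3 := Real.add_one_le_exp (t ^ 2 * (p * (1 - p)))
  have c1 := mul_le_mul_of_nonneg_left b1 hp0
  have c2 := mul_le_mul_of_nonneg_left b2 (by linarith : 0 ≤ 1 - p)
  nlinarith

lemma js_mgf (m d : ℕ) (hm : 1 ≤ m) (A : Set (Fin d → ℝ)) (hA : MeasurableSet A)
    (hsub : ∀ u ∈ A, ∀ i, u i ∈ Set.Ico (0 : ℝ) 1) (t : ℝ) (ht : |t| ≤ 1) (v : ℝ)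
    (hv : ∑ x, jsP m d A x * (1 - jsP m d A x) ≤ v) :
    Integrable (fun P => Real.exp (t * jdisc m d P A)) (jitterMeasure m d) ∧
    ∫ P, Real.exp (t * jdisc m d P A) ∂(jitterMeasure m d) ≤ Real.exp (t ^ 2 * v) := by
  have := js_prob m d hm
  have hrw : (fun P => Real.exp (t * jdisc m d P A)) =
      fun P : (Fin d → Fin m) → (Fin d → ℝ) =>
        ∏ x, Real.exp (t * (A.indicator (fun _ => (1 : ℝ)) (P x) - jsP m d A x)) := by
    funext P
    rw [js_disc_eq m d hm A hA hsub, Finset.mul_sum, Real.exp_sum]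
  rw [hrw, jitterMeasure]
  refine ⟨Integrable.fintype_prod
    (f := fun x u => Real.exp (t * (A.indicator (fun _ => (1 : ℝ)) u - jsP m d A x)))
    fun x => (js_factor m d hm A hA t ht x).1, ?_⟩
  rw [integral_fintype_prod_eq_prod
    (f := fun x u => Real.exp (t * (A.indicator (fun _ => (1 : ℝ)) u - jsP m d A x)))]
  calc _ ≤ ∏ x, Real.exp (t ^ 2 * (jsP m d A x * (1 - jsP m d A x))) := by
        apply Finset.prod_le_prod
        · intro x _; exact integral_nonneg fun u => (Real.exp_pos _).le
        · intro x _; exact (js_factor m d hm A hA t ht x).2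
    _ = Real.exp (t ^ 2 * ∑ x, jsP m d A x * (1 - jsP m d A x)) := by
        rw [← Real.exp_sum, Finset.mul_sum]
    _ ≤ _ := by
        apply Real.exp_le_exp.2
        exact mul_le_mul_of_nonneg_left hv (sq_nonneg t)

/-- maximal inequality for a finite family of sets -/
lemma js_max (m d : ℕ) (hm : 1 ≤ m) {ι : Type} (J : Finset ι) (A : ι → Set (Fin d → ℝ))
    (hA : ∀ j ∈ J, MeasurableSet (A j))
    (hsub : ∀ j ∈ J, ∀ u ∈ A j, ∀ i, u i ∈ Set.Ico (0 : ℝ) 1) (t : ℝ) (ht0 : 0 < t) (ht : t ≤ 1)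
    (v L : ℝ) (hv : ∀ j ∈ J, ∑ x, jsP m d (A j) x * (1 - jsP m d (A j) x) ≤ v)
    (hL : 2 * (J.card : ℝ) ≤ Real.exp L) :
    ∃ G : ((Fin d → Fin m) → (Fin d → ℝ)) → ℝ, Integrable G (jitterMeasure m d) ∧
      ∫ P, G P ∂(jitterMeasure m d) ≤ L / t + v * t ∧
      ∀ P, ∀ j ∈ J, |jdisc m d P (A j)| ≤ G P := by
  have hprob := js_prob m d hm
  have : IsProbabilityMeasure (jitterMeasure m d) := by
    unfold jitterMeasure; infer_instance
  set c := L + t ^ 2 * v with hc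
  have habs : |t| ≤ 1 := by rwa [abs_of_pos ht0]
  have habs' : |-t| ≤ 1 := by rwa [abs_neg]
  have i1 := fun j hj => js_mgf m d hm (A j) (hA j hj) (hsub j hj) t habs v (hv j hj)
  have i2 := fun j hj => js_mgf m d hm (A j) (hA j hj) (hsub j hj) (-t) habs' v (hv j hj)
  have hi3 : Integrable (fun P => ∑ j ∈ J, (Real.exp (t * jdisc m d P (A j)) +
      Real.exp (-t * jdisc m d P (A j)))) (jitterMeasure m d) :=
    integrable_finsetSum _ fun j hj => (i1 j hj).1.add (i2 j hj).1
  refine ⟨fun P => t⁻¹ * ((c - 1) + Real.exp (-c) * ∑ j ∈ J, (Real.exp (t * jdisc m d P (A j)) +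
      Real.exp (-t * jdisc m d P (A j)))), ?_, ?_, ?_⟩
  · exact ((integrable_const _).add (hi3.const_mul _)).const_mul _
  · rw [integral_const_mul, integral_add (integrable_const _) (hi3.const_mul _),
      integral_const_mul, integral_finsetSum (f := fun j P => Real.exp (t * jdisc m d P (A j)) +
        Real.exp (-t * jdisc m d P (A j))) _ fun j hj => (i1 j hj).1.add (i2 j hj).1]
    simp only [integral_const, probReal_univ, smul_eq_mul, one_mul]
    have hs : ∑ j ∈ J, ∫ P, (Real.exp (t * jdisc m d P (A j)) +
      Real.exp (-t * jdisc m d P (A j))) ∂(jitterMeasure m d) ≤ Real.exp c := by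
      calc _ ≤ ∑ j ∈ J, 2 * Real.exp (t ^ 2 * v) := by
            apply Finset.sum_le_sum
            intro j hj
            rw [integral_add (i1 j hj).1 (i2 j hj).1]
            have a1 := (i1 j hj).2
            have a2 := (i2 j hj).2
            rw [neg_sq] at a2
            linarith
        _ = (2 * (J.card : ℝ)) * Real.exp (t ^ 2 * v) := by
            rw [Finset.sum_const, nsmul_eq_mul]; ring
        _ ≤ Real.exp L * Real.exp (t ^ 2 * v) := by gcongr
        _ = _ := by rw [← Real.exp_add]
    have hs2 : Real.exp (-c) * ∑ j ∈ J, ∫ P, (Real.exp (t * jdisc m d P (A j)) +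
      Real.exp (-t * jdisc m d P (A j))) ∂(jitterMeasure m d) ≤ 1 := by
      calc _ ≤ Real.exp (-c) * Real.exp c := by gcongr
        _ = 1 := by rw [← Real.exp_add]; simp
    calc _ ≤ t⁻¹ * (c - 1 + 1) := by gcongr
      _ = _ := by rw [hc]; field_simp; ring
  · intro P j hj
    have h1 : Real.exp (t * |jdisc m d P (A j)|) ≤ ∑ j ∈ J, (Real.exp (t * jdisc m d P (A j)) +
      Real.exp (-t * jdisc m d P (A j))) := by
      refine le_trans ?_ (Finset.single_le_sum (f := fun j => (Real.exp (t * jdisc m d P (A j)) +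
        Real.exp (-t * jdisc m d P (A j)))) (fun _ _ => by positivity) hj)
      rcases abs_cases (jdisc m d P (A j)) with ⟨h, _⟩ | ⟨h, _⟩ <;> rw [h]
      · linarith [Real.exp_pos (-t * jdisc m d P (A j))]
      · have e : t * -jdisc m d P (A j) = -t * jdisc m d P (A j) := by ring
        rw [e]
        linarith [Real.exp_pos (t * jdisc m d P (A j))]
    have h2 := Real.add_one_le_exp (t * |jdisc m d P (A j)| - c)
    have h3 : Real.exp (t * |jdisc m d P (A j)| - c) =
        Real.exp (-c) * Real.exp (t * |jdisc m d P (A j)|) := by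
      rw [← Real.exp_add]; congr 1; ring
    have h4 : t * |jdisc m d P (A j)| ≤ (c - 1) + Real.exp (-c) * ∑ j ∈ J,
        (Real.exp (t * jdisc m d P (A j)) + Real.exp (-t * jdisc m d P (A j))) := by
      have := mul_le_mul_of_nonneg_left h1 (Real.exp_pos (-c)).le
      linarith
    calc |jdisc m d P (A j)| = t⁻¹ * (t * |jdisc m d P (A j)|) := by field_simp
      _ ≤ _ := mul_le_mul_of_nonneg_left h4 (by positivity)

lemma js_box_meas (d : ℕ) (y : Fin d → ℝ) : MeasurableSet (anchoredBox d y) :=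
  MeasurableSet.univ_pi fun _ => measurableSet_Ico

lemma js_box_vol (d : ℕ) (y : Fin d → ℝ) (hy : ∀ i, 0 ≤ y i) :
    (volume (anchoredBox d y)).toReal = ∏ i, y i := by
  have := Real.volume_pi_Ico_toReal (a := fun _ : Fin d => (0 : ℝ)) (b := y) hy
  simpa [anchoredBox] using this

lemma js_box_fin (d : ℕ) (y : Fin d → ℝ) : volume (anchoredBox d y) ≠ ⊤ := by
  rw [anchoredBox, Real.volume_pi_Ico]
  exact ENNReal.prod_ne_top fun i _ => ENNReal.ofReal_ne_top

lemma js_box_sub (d : ℕ) (y : Fin d → ℝ) (hy : ∀ i, y i ≤ 1) :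
    ∀ u ∈ anchoredBox d y, ∀ i, u i ∈ Set.Ico (0 : ℝ) 1 := by
  intro u hu i
  have := hu i (Set.mem_univ i)
  exact ⟨this.1, this.2.trans_le (hy i)⟩

lemma js_box_mono (d : ℕ) (y z : Fin d → ℝ) (h : ∀ i, y i ≤ z i) :
    anchoredBox d y ⊆ anchoredBox d z := by
  intro u hu i hi
  exact ⟨(hu i hi).1, (hu i hi).2.trans_le (h i)⟩

lemma js_disc_diff (m d : ℕ) (P : (Fin d → Fin m) → (Fin d → ℝ)) (A B : Set (Fin d → ℝ))
    (hA : MeasurableSet A) (hAB : A ⊆ B) (hB : volume B ≠ ⊤) :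
    jdisc m d P (B \ A) = jdisc m d P B - jdisc m d P A := by
  classical
  have hAf : volume A ≠ ⊤ := ne_top_of_le_ne_top hB (measure_mono hAB)
  have hv : (volume (B \ A)).toReal = (volume B).toReal - (volume A).toReal := by
    rw [measure_sdiff hAB hA.nullMeasurableSet hAf, ENNReal.toReal_sub_of_le (measure_mono hAB) hB]
  have hc : ∀ s : Set (Fin d → ℝ), jdisc m d P s =
      ∑ x, s.indicator (fun _ => (1 : ℝ)) (P x) - (m : ℝ) ^ d * (volume s).toReal := by
    intro s
    rw [jdisc]
    congr 1
    rw [Finset.card_filter]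
    push_cast
    apply Finset.sum_congr rfl
    intro x _
    simp [Set.indicator_apply]
  have hs : ∑ x, (B \ A).indicator (fun _ => (1 : ℝ)) (P x) =
      ∑ x, B.indicator (fun _ => (1 : ℝ)) (P x) - ∑ x, A.indicator (fun _ => (1 : ℝ)) (P x) := by
    rw [← Finset.sum_sub_distrib]
    apply Finset.sum_congr rfl
    intro x _
    by_cases h1 : P x ∈ A
    · simp [h1, hAB h1]
    · simp [Set.indicator_apply, h1]
  rw [hc, hc, hc, hv, hs]
  ring

lemma js_disc_sub (m d : ℕ) (P : (Fin d → Fin m) → (Fin d → ℝ)) (A B : Set (Fin d → ℝ))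
    (hAB : A ⊆ B) (hB : volume B ≠ ⊤) :
    |jdisc m d P A| ≤ |jdisc m d P B| + (m : ℝ) ^ d * (volume B).toReal := by
  classical
  have hv : (volume A).toReal ≤ (volume B).toReal := ENNReal.toReal_mono hB (measure_mono hAB)
  have hv0 : 0 ≤ (volume A).toReal := ENNReal.toReal_nonneg
  have hm : (0 : ℝ) ≤ (m : ℝ) ^ d := by positivity
  have h1 := mul_le_mul_of_nonneg_left hv hm
  have h2 := mul_nonneg hm hv0
  have hb := le_abs_self (jdisc m d P B)
  have hb' := abs_nonneg (jdisc m d P B)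
  refine abs_le.2 ⟨?_, ?_⟩
  · unfold jdisc at *
    have := Nat.cast_nonneg (α := ℝ) (Finset.univ.filter fun x => P x ∈ A).card
    linarith
  · unfold jdisc at *
    have : ((Finset.univ.filter fun x => P x ∈ A).card : ℝ) ≤
        ((Finset.univ.filter fun x => P x ∈ B).card : ℝ) := by
      exact_mod_cast Finset.card_le_card
        (Finset.monotone_filter_right _ fun x _ hx => hAB hx)
    linarith

lemma js_var_le (m d : ℕ) (hm : 1 ≤ m) (A : Set (Fin d → ℝ)) (hA : MeasurableSet A)
    (hsub : ∀ u ∈ A, ∀ i, u i ∈ Set.Ico (0 : ℝ) 1) :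
    ∑ x, jsP m d A x * (1 - jsP m d A x) ≤ (m : ℝ) ^ d * (volume A).toReal := by
  rw [← jsP_sum m d hm A hA hsub]
  apply Finset.sum_le_sum
  intro x _
  have := jsP_mem m d hm A hA x
  nlinarith

lemma js_tele {ι : Type} (s : Finset ι) (a b : ι → ℝ) (m : ℝ)
    (h : ∀ i, 0 ≤ b i ∧ b i ≤ a i ∧ a i ≤ m ∧ a i - b i ≤ 1) :
    0 ≤ ∏ i ∈ s, a i - ∏ i ∈ s, b i ∧ ∏ i ∈ s, b i ≤ m ^ s.card ∧
    m * (∏ i ∈ s, a i - ∏ i ∈ s, b i) ≤ s.card * m ^ s.card := by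
  classical
  induction s using Finset.induction_on with
  | empty => simp
  | insert j s hj ih =>
    obtain ⟨h0, hb, ih⟩ := ih
    obtain ⟨h1, h2, h3, h4⟩ := h j
    have hm : 0 ≤ m := by linarith
    have hbn : 0 ≤ ∏ i ∈ s, b i := Finset.prod_nonneg fun i _ => (h i).1
    rw [Finset.prod_insert hj, Finset.prod_insert hj, Finset.card_insert_of_notMem hj]
    have e : a j * ∏ i ∈ s, a i - b j * ∏ i ∈ s, b i =
      a j * (∏ i ∈ s, a i - ∏ i ∈ s, b i) + (a j - b j) * ∏ i ∈ s, b i := by ring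
    refine ⟨?_, ?_, ?_⟩
    · rw [e]
      exact add_nonneg (mul_nonneg (by linarith) h0) (mul_nonneg (by linarith) hbn)
    · rw [pow_succ, mul_comm]
      exact mul_le_mul hb (by linarith) h1 (by positivity)
    · rw [e]
      have c1 : m * (a j * (∏ i ∈ s, a i - ∏ i ∈ s, b i)) ≤ m * (s.card * m ^ s.card) := by
        calc m * (a j * (∏ i ∈ s, a i - ∏ i ∈ s, b i))
            = a j * (m * (∏ i ∈ s, a i - ∏ i ∈ s, b i)) := by ring
          _ ≤ m * (s.card * m ^ s.card) :=
            mul_le_mul h3 ih (mul_nonneg hm h0) hm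
      have c2 : (a j - b j) * ∏ i ∈ s, b i ≤ 1 * m ^ s.card :=
        mul_le_mul h4 hb hbn (by norm_num)
      have c3 := mul_le_mul_of_nonneg_left c2 hm
      push_cast
      rw [pow_succ]
      linarith

lemma js_var_box (m d : ℕ) (hm : 1 ≤ m) (hd : 1 ≤ d) (z : Fin d → ℝ)
    (hz : ∀ i, 0 ≤ z i ∧ z i ≤ 1) :
    ∑ x, jsP m d (anchoredBox d z) x * (1 - jsP m d (anchoredBox d z) x) ≤
      d * (m : ℝ) ^ (d - 1) := by
  have hm' : (0 : ℝ) < m := by exact_mod_cast hm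
  set n : Fin d → ℕ := fun i => ⌊m * z i⌋₊ with hn
  have hn1 : ∀ i, (n i : ℝ) ≤ m * z i := fun i => Nat.floor_le (mul_nonneg hm'.le (hz i).1)
  have hn2 : ∀ i, m * z i < n i + 1 := fun i => Nat.lt_floor_add_one _
  have hn3 : ∀ i, m * z i ≤ m := fun i => by have := (hz i).2; nlinarith
  have hnm : ∀ i, n i ≤ m := fun i => by exact_mod_cast (hn1 i).trans (hn3 i)
  set I : Finset (Fin d → Fin m) :=
    Fintype.piFinset fun i => Finset.univ.filter fun j : Fin m => (j : ℕ) < n i with hI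
  have hcard : (I.card : ℝ) = ∏ i, (n i : ℝ) := by
    rw [hI, Fintype.card_piFinset]
    push_cast
    apply Finset.prod_congr rfl
    intro i _
    rw [Fin.card_filter_val_lt]
    simp [hnm i]
  have hin : ∀ x ∈ I, jsP m d (anchoredBox d z) x = 1 := by
    intro x hx
    apply jsP_one m d hm
    intro u hu i hi
    have h1 := hu i hi
    have h2 : (x i : ℕ) < n i := by
      have := Fintype.mem_piFinset.1 hx i
      simpa using this
    have h2' : ((x i : ℕ) : ℝ) + 1 ≤ n i := by exact_mod_cast h2
    refine ⟨le_trans (by positivity) h1.1, ?_⟩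
    refine h1.2.trans_le ?_
    rw [← add_div, div_le_iff₀ hm']
    have := hn1 i
    linarith
  have hsum := jsP_sum m d hm (anchoredBox d z) (js_box_meas d z)
    (js_box_sub d z fun i => (hz i).2)
  rw [js_box_vol d z fun i => (hz i).1] at hsum
  have hprod : (m : ℝ) ^ d * ∏ i, z i = ∏ i, ((m : ℝ) * z i) := by
    rw [Finset.prod_mul_distrib]; simp
  have htele := (js_tele Finset.univ (fun i => (m : ℝ) * z i) (fun i => (n i : ℝ)) m
    fun i => ⟨by positivity, hn1 i, hn3 i, by have := hn2 i; linarith⟩).2.2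
  have hbound : ∑ x, jsP m d (anchoredBox d z) x * (1 - jsP m d (anchoredBox d z) x) ≤
      ∑ x, (jsP m d (anchoredBox d z) x - if x ∈ I then 1 else 0) := by
    apply Finset.sum_le_sum
    intro x _
    split_ifs with h
    · rw [hin x h]; norm_num
    · have := jsP_mem m d hm (anchoredBox d z) (js_box_meas d z) x
      nlinarith
  refine hbound.trans ?_
  rw [Finset.sum_sub_distrib, hsum, hprod]
  simp only [Finset.sum_ite_mem, Finset.univ_inter, Finset.sum_const, nsmul_eq_mul, mul_one]
  rw [hcard]
  simp only [Finset.card_univ, Fintype.card_fin] at htele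
  obtain ⟨e, rfl⟩ : ∃ e, d = e + 1 := ⟨d - 1, by omega⟩
  rw [Nat.add_sub_cancel]
  rw [pow_succ] at htele
  have : (m : ℝ) * (∏ i, ((m : ℝ) * z i) - ∏ i, (n i : ℝ)) ≤ m * ((e + 1 : ℕ) * (m : ℝ) ^ e) := by
    linarith
  exact le_of_mul_le_mul_left this hm'

lemma js_count (d k : ℕ) (hd : 1 ≤ d) (r c : ℝ) (hr : 1 ≤ r)
    (hc : c ≤ (Real.exp 1 * (5 / 2 / ((1 / r) / 4 ^ k) ^ 2)) ^ d) :
    2 * c ≤ Real.exp (2 * d * Real.log (4 * Real.exp 1 * r) * (k + 1)) := by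
  have hr0 : 0 < r := by linarith
  have he : 1 ≤ Real.exp 1 := Real.one_le_exp (by norm_num)
  have e1 : Real.exp (2 * d * Real.log (4 * Real.exp 1 * r) * (k + 1)) =
      (((4 * Real.exp 1 * r) ^ 2) ^ (k + 1)) ^ d := by
    rw [← pow_mul, ← pow_mul]
    conv_rhs => rw [← Real.exp_log (show 0 < 4 * Real.exp 1 * r by positivity)]
    rw [← Real.exp_nat_mul]
    congr 1
    push_cast
    ring
  rw [e1]
  have h2 : (2 : ℝ) ≤ 2 ^ d := by
    calc (2 : ℝ) = 2 ^ 1 := by norm_num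
      _ ≤ 2 ^ d := pow_le_pow_right₀ (by norm_num) hd
  calc 2 * c ≤ 2 * (Real.exp 1 * (5 / 2 / ((1 / r) / 4 ^ k) ^ 2)) ^ d := by linarith
    _ ≤ 2 ^ d * (Real.exp 1 * (5 / 2 / ((1 / r) / 4 ^ k) ^ 2)) ^ d := by gcongr
    _ = (5 * Real.exp 1 * r ^ 2 * 16 ^ k) ^ d := by
        rw [← mul_pow]
        congr 1
        have : (16 : ℝ) ^ k = (4 ^ k) ^ 2 := by rw [← pow_mul, mul_comm, pow_mul]; norm_num
        rw [this]
        field_simp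
        try ring
    _ ≤ _ := by
        apply pow_le_pow_left₀ (by positivity)
        rw [pow_succ' ((4 * Real.exp 1 * r) ^ 2) k]
        have hr2 : 1 ≤ r ^ 2 := one_le_pow₀ hr
        have he2 : Real.exp 1 ≤ Real.exp 1 ^ 2 := by nlinarith
        have a1 : (16 : ℝ) ≤ (4 * Real.exp 1 * r) ^ 2 := by
          have : 4 ≤ 4 * Real.exp 1 * r := by nlinarith
          nlinarith
        have a2 : 5 * Real.exp 1 * r ^ 2 ≤ (4 * Real.exp 1 * r) ^ 2 := by
          have : (4 * Real.exp 1 * r) ^ 2 = 16 * Real.exp 1 ^ 2 * r ^ 2 := by ring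
          rw [this]
          gcongr
          norm_num
        exact mul_le_mul a2 (pow_le_pow_left₀ (by norm_num) a1 k) (by positivity) (by positivity)

lemma js_main (m d : ℕ) (hd : 2 ≤ d) (hmd : d ≤ m) :
    expStarDisc m d ≤ 31.5 * (d * Real.sqrt ((m : ℝ) ^ (d - 1)) *
      Real.sqrt (Real.log (4 * Real.exp 1 * m / d))) := by
  have hd' : (2 : ℝ) ≤ d := by exact_mod_cast hd
  have hd0 : (0 : ℝ) < d := by linarith
  have hm1 : 1 ≤ m := by omega
  have hmd' : (d : ℝ) ≤ m := by exact_mod_cast hmd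
  have hm' : (0 : ℝ) < m := by linarith
  have hr1 : 1 ≤ (m : ℝ) / d := by rw [le_div_iff₀ hd0]; linarith
  have hassoc : 4 * Real.exp 1 * m / d = 4 * Real.exp 1 * ((m : ℝ) / d) := by ring
  set Λ := Real.log (4 * Real.exp 1 * m / d) with hΛ
  have he : 1 ≤ Real.exp 1 := Real.one_le_exp (by norm_num)
  have hΛ1 : 1 ≤ Λ := by
    rw [hΛ, hassoc, Real.le_log_iff_exp_le (by positivity)]
    nlinarith
  have hpm : (m : ℝ) ≤ (m : ℝ) ^ (d - 1) := by
    calc (m : ℝ) = (m : ℝ) ^ 1 := by simp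
      _ ≤ _ := pow_le_pow_right₀ (by linarith) (by omega)
  have hΛm : Λ ≤ 4 * (m : ℝ) ^ (d - 1) := by
    have h1 : Λ ≤ Real.log (Real.exp 1 * (2 * m)) := by
      rw [hΛ]
      apply Real.log_le_log (by positivity)
      rw [div_le_iff₀ hd0]
      have : 0 < Real.exp 1 * m := by positivity
      nlinarith
    rw [Real.log_mul (by positivity) (by positivity), Real.log_exp] at h1
    have h2 := Real.log_le_sub_one_of_pos (show (0 : ℝ) < 2 * m by positivity)
    linarith
  set s := Real.sqrt ((m : ℝ) ^ (d - 1)) with hs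
  have hs2 : s ^ 2 = (m : ℝ) ^ (d - 1) := Real.sq_sqrt (by positivity)
  have hs0 : 0 < s := Real.sqrt_pos.2 (by positivity)
  set w := Real.sqrt Λ with hw
  have hw2 : w ^ 2 = Λ := Real.sq_sqrt (by linarith)
  have hw0 : 0 < w := Real.sqrt_pos.2 (by linarith)
  have hw2s : w ≤ 2 * s := by
    refine (pow_le_pow_iff_left₀ hw0.le (by positivity) two_ne_zero).1 ?_
    rw [mul_pow, hw2, hs2]; linarith
  set t := w / (2 * s) with ht
  have ht0 : 0 < t := by positivity
  have ht1 : t ≤ 1 := by rw [ht, div_le_one (by positivity)]; exact hw2s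
  have hNd : (m : ℝ) ^ d = m * s ^ 2 := by
    rw [hs2]
    obtain ⟨e, rfl⟩ : ∃ e, d = e + 1 := ⟨d - 1, by omega⟩
    rw [Nat.add_sub_cancel, pow_succ]; ring
  have hδ0 : ∀ k : ℕ, 0 < 1 / ((m : ℝ) / d) / 4 ^ k := fun k => by positivity
  have hδ1 : ∀ k : ℕ, 1 / ((m : ℝ) / d) / 4 ^ k ≤ 1 := fun k => by
    rw [div_le_one (by positivity)]
    have h1 : 1 / ((m : ℝ) / d) ≤ 1 := by rw [div_le_one (by positivity)]; exact hr1
    exact h1.trans (one_le_pow₀ (by norm_num))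
  have hNδ : ∀ k : ℕ, (m : ℝ) ^ d * (1 / ((m : ℝ) / d) / 4 ^ k) = d * s ^ 2 / 4 ^ k := fun k => by
    rw [hNd]; field_simp
  choose S z l hcard hrange hvol hcov using fun k => js_cover d hd _ (hδ0 k) (hδ1 k)
  have hL : ∀ k, 2 * ((S k).card : ℝ) ≤ Real.exp (2 * d * Λ * (k + 1)) := fun k => by
    rw [hΛ, hassoc]
    exact js_count d k (by omega) _ _ hr1 (hcard k)
  have h4 : ∀ k : ℕ, (4 : ℝ) ^ k = 2 ^ k * 2 ^ k := fun k => by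
    rw [← mul_pow]; norm_num
  -- maximal inequality for differences of boxes
  have hdiff : ∀ (k j : ℕ) (y x : (Fin d → ℕ) → Fin d → ℝ),
      (∀ a ∈ S j, ∀ i, 0 ≤ x a i ∧ x a i ≤ y a i ∧ y a i ≤ 1) →
      (∀ a ∈ S j, ∏ i, y a i - ∏ i, x a i ≤ 1 / ((m : ℝ) / d) / 4 ^ k) → 2 ^ k * t ≤ 1 →
      ∃ G : ((Fin d → Fin m) → (Fin d → ℝ)) → ℝ, Integrable G (jitterMeasure m d) ∧
      ∫ P, G P ∂(jitterMeasure m d) ≤ (4 * (j + 1) + 1 / 2) * (d * s * w) / 2 ^ k ∧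
      ∀ P, ∀ a ∈ S j, |jdisc m d P (anchoredBox d (y a) \ anchoredBox d (x a))| ≤ G P := by
    intro k j y x hxy hv hk
    obtain ⟨G, hG1, hG2, hG3⟩ := js_max m d hm1 (S j)
      (fun a => anchoredBox d (y a) \ anchoredBox d (x a))
      (fun a _ => (js_box_meas d _).diff (js_box_meas d _))
      (fun a ha u hu => js_box_sub d (y a) (fun i => (hxy a ha i).2.2) u hu.1)
      (2 ^ k * t) (by positivity) hk (d * s ^ 2 / 4 ^ k) (2 * d * Λ * (j + 1))
      (fun a ha => by
        refine (js_var_le m d hm1 _ ((js_box_meas d _).diff (js_box_meas d _))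
          (fun u hu => js_box_sub d (y a) (fun i => (hxy a ha i).2.2) u hu.1)).trans ?_
        have hsubs := js_box_mono d (x a) (y a) fun i => (hxy a ha i).2.1
        rw [measure_sdiff hsubs (js_box_meas d _).nullMeasurableSet (js_box_fin d _),
          ENNReal.toReal_sub_of_le (measure_mono hsubs) (js_box_fin d _),
          js_box_vol d _ fun i => (hxy a ha i).1.trans (hxy a ha i).2.1,
          js_box_vol d _ fun i => (hxy a ha i).1, ← hNδ k]
        exact mul_le_mul_of_nonneg_left (hv a ha) (by positivity)) (hL j)
    refine ⟨G, hG1, hG2.trans (le_of_eq ?_), hG3⟩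
    rw [← hw2, ht, h4]
    field_simp
    try ring
  -- chaining
  have hchain : ∀ k : ℕ, 2 ^ k * t ≤ 1 →
      ∃ G : ((Fin d → Fin m) → (Fin d → ℝ)) → ℝ, Integrable G (jitterMeasure m d) ∧
      ∫ P, G P ∂(jitterMeasure m d) ≤ (29.5 - (8 * k + 25) / 2 ^ k) * (d * s * w) ∧
      ∀ P, ∀ a ∈ S k, |jdisc m d P (anchoredBox d (z k a))| ≤ G P := by
    intro k
    induction k with
    | zero =>
      intro _
      obtain ⟨G, hG1, hG2, hG3⟩ := js_max m d hm1 (S 0)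
        (fun a => anchoredBox d (z 0 a)) (fun a _ => js_box_meas d _)
        (fun a ha => js_box_sub d _ (fun i => (hrange 0 a ha i).2.2))
        t ht0 ht1 (d * s ^ 2) (2 * d * Λ * ((0 : ℕ) + 1))
        (fun a ha => by
          rw [hs2]
          exact js_var_box m d hm1 (by omega) _ fun i =>
            ⟨(hrange 0 a ha i).1.trans (hrange 0 a ha i).2.1, (hrange 0 a ha i).2.2⟩) (hL 0)
      refine ⟨G, hG1, hG2.trans (le_of_eq ?_), hG3⟩
      rw [← hw2, ht]
      push_cast
      field_simp
      norm_num
      try ring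
    | succ k ih =>
      intro hk
      have hk' : 2 ^ k * t ≤ 1 := by
        rw [pow_succ] at hk
        have : 0 < 2 ^ k * t := by positivity
        linarith
      obtain ⟨G, hG1, hG2, hG3⟩ := ih hk'
      have hpi : ∀ a : Fin d → ℕ, ∃ b : Fin d → ℕ, a ∈ S (k + 1) → b ∈ S k ∧
          ∀ i, l k b i ≤ z (k + 1) a i ∧ z (k + 1) a i ≤ z k b i := by
        intro a
        by_cases ha : a ∈ S (k + 1)
        · obtain ⟨b, hb, hb'⟩ := hcov k (z (k + 1) a) fun i =>
            ⟨(hrange _ a ha i).1.trans (hrange _ a ha i).2.1, (hrange _ a ha i).2.2⟩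
          exact ⟨b, fun _ => ⟨hb, hb'⟩⟩
        · exact ⟨a, fun h => absurd h ha⟩
      choose pr hpr using hpi
      obtain ⟨H, hH1, hH2, hH3⟩ := hdiff k (k + 1) (fun a => z k (pr a)) (z (k + 1))
        (fun a ha i => ⟨(hrange _ a ha i).1.trans (hrange _ a ha i).2.1, ((hpr a ha).2 i).2,
          (hrange _ _ (hpr a ha).1 i).2.2⟩)
        (fun a ha => by
          refine le_trans ?_ (hvol k _ (hpr a ha).1)
          apply sub_le_sub_left
          apply Finset.prod_le_prod
          · intro i _; exact (hrange _ _ (hpr a ha).1 i).1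
          · intro i _; exact ((hpr a ha).2 i).1) hk'
      refine ⟨fun P => G P + H P, hG1.add hH1, ?_, ?_⟩
      · rw [integral_add hG1 hH1]
        refine (add_le_add hG2 hH2).trans (le_of_eq ?_)
        push_cast
        rw [pow_succ]
        field_simp
        ring
      · intro P a ha
        have e := js_disc_diff m d P _ _ (js_box_meas d (z (k + 1) a))
          (js_box_mono d _ (z k (pr a)) fun i => ((hpr a ha).2 i).2) (js_box_fin d _)
        have b1 := hG3 P _ (hpr a ha).1
        have b2 := hH3 P a ha
        rw [e] at b2
        rw [abs_le] at *
        constructor <;> linarith [b1.1, b1.2, b2.1, b2.2]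
  obtain ⟨K, hK1, hK2⟩ := exists_nat_pow_near (one_le_one_div ht0 ht1) (one_lt_two (α := ℝ))
  rw [le_div_iff₀ ht0] at hK1
  rw [div_lt_iff₀ ht0] at hK2
  obtain ⟨G, hG1, hG2, hG3⟩ := hchain K hK1
  obtain ⟨H, hH1, hH2, hH3⟩ := hdiff K K (z K) (l K) (hrange K) (hvol K) hK1
  have hprob := js_prob m d hm1
  have : IsProbabilityMeasure (jitterMeasure m d) := by
    unfold jitterMeasure; infer_instance
  have hpt : ∀ P, starDisc m d P ≤ G P + H P + d * s ^ 2 / 4 ^ K := by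
    intro P
    have : Nonempty {y : Fin d → ℝ // ∀ i, y i ∈ Set.Ico (0 : ℝ) 1} :=
      ⟨⟨fun _ => 0, fun i => by simp⟩⟩
    apply ciSup_le
    rintro ⟨y, hy⟩
    obtain ⟨a, ha, hay⟩ := hcov K y fun i => ⟨(hy i).1, (hy i).2.le⟩
    have b1 := hG3 P a ha
    have b2 := hH3 P a ha
    have hsubs := js_box_mono d (l K a) (z K a) fun i => (hrange K a ha i).2.1
    have hyz := js_box_mono d y (z K a) fun i => (hay i).2
    have hly := js_box_mono d (l K a) y fun i => (hay i).1
    have e := js_disc_diff m d P _ _ (js_box_meas d y) hyz (js_box_fin d _)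
    have b3 := js_disc_sub m d P (anchoredBox d (z K a) \ anchoredBox d y)
      (anchoredBox d (z K a) \ anchoredBox d (l K a)) (Set.sdiff_subset_sdiff_right hly)
      (ne_top_of_le_ne_top (js_box_fin d _) (measure_mono Set.sdiff_subset))
    rw [e, measure_sdiff hsubs (js_box_meas d _).nullMeasurableSet (js_box_fin d _),
      ENNReal.toReal_sub_of_le (measure_mono hsubs) (js_box_fin d _),
      js_box_vol d _ fun i => (hrange K a ha i).1.trans (hrange K a ha i).2.1,
      js_box_vol d _ fun i => (hrange K a ha i).1] at b3
    have b4 : (m : ℝ) ^ d * (∏ i, z K a i - ∏ i, l K a i) ≤ d * s ^ 2 / 4 ^ K := by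
      rw [← hNδ K]
      exact mul_le_mul_of_nonneg_left (hvol K a ha) (by positivity)
    have b5 : |jdisc m d P (anchoredBox d (z K a)) - jdisc m d P (anchoredBox d y)| ≤
      H P + d * s ^ 2 / 4 ^ K := by linarith
    dsimp only
    rw [abs_le] at b1 b5 ⊢
    constructor <;> linarith [b1.1, b1.2, b5.1, b5.2]
  have hnn : ∀ P, 0 ≤ starDisc m d P := fun P => Real.iSup_nonneg fun y => abs_nonneg _
  have hIntg : expStarDisc m d ≤ ∫ P, (G P + H P + d * s ^ 2 / 4 ^ K) ∂(jitterMeasure m d) :=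
    integral_mono_of_nonneg (Filter.Eventually.of_forall hnn)
      ((hG1.add hH1).add (integrable_const _)) (Filter.Eventually.of_forall hpt)
  have hGH : Integrable (fun P => G P + H P) (jitterMeasure m d) := hG1.add hH1
  rw [integral_add hGH (integrable_const _), integral_add hG1 hH1] at hIntg
  simp only [integral_const, probReal_univ, smul_eq_mul, one_mul] at hIntg
  set W := d * s * w with hW
  have hW0 : 0 < W := by positivity
  have hlast : d * s ^ 2 / 4 ^ K ≤ 2 * W := by
    have hp : (0 : ℝ) < 2 ^ K := by positivity
    rw [pow_succ, ht] at hK2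
    have h5 : s < 2 ^ K * w := by
      have : (2 : ℝ) ^ K * 2 * (w / (2 * s)) = 2 ^ K * w / s := by field_simp
      rw [this, lt_div_iff₀ hs0] at hK2
      linarith
    rw [div_le_iff₀ (by positivity), h4, hW]
    have h6 : s ^ 2 ≤ (2 ^ K * w) ^ 2 := by gcongr
    calc (d : ℝ) * s ^ 2 ≤ d * (2 ^ K * w) ^ 2 := by gcongr
      _ = d * w * w * (2 ^ K * 2 ^ K) := by ring
      _ ≤ d * w * (2 * s) * (2 ^ K * 2 ^ K) := by gcongr
      _ = _ := by ring
  have hfin : (29.5 - (8 * (K : ℝ) + 25) / 2 ^ K) * W + (4 * ((K : ℝ) + 1) + 1 / 2) * W / 2 ^ K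
      ≤ 29.5 * W := by
    have h7 : (4 * ((K : ℝ) + 1) + 1 / 2) * W / 2 ^ K ≤ (8 * (K : ℝ) + 25) / 2 ^ K * W := by
      rw [div_mul_eq_mul_div]
      have hK0 : (0 : ℝ) ≤ K := Nat.cast_nonneg K
      exact div_le_div_of_nonneg_right
        (mul_le_mul_of_nonneg_right (by linarith) hW0.le) (by positivity)
    linarith
  linarith

/-- For `m ≥ d ≥ 2` and `N = m^d`, a jittered sampling point set `P` of `N` points in `[0,1)^d`
satisfies `E[D*(P)] ≤ 60.9984·√(d·m^d)·(√(ln(4e·m/d)) + 2.9599)/√(m/d)`. -/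
theorem jittered_sampling_upper_bound (m d : ℕ) (hd : 2 ≤ d) (hmd : d ≤ m) :
    expStarDisc m d ≤
      60.9984 * Real.sqrt ((d : ℝ) * (m : ℝ) ^ d) *
        (Real.sqrt (Real.log (4 * Real.exp 1 * m / d)) + 2.9599) / Real.sqrt ((m : ℝ) / d) := by
  have hd' : (2 : ℝ) ≤ d := by exact_mod_cast hd
  have hm' : (0 : ℝ) < m := by exact_mod_cast (by omega : 0 < m)
  have hmain := js_main m d hd hmd
  set Λ := Real.log (4 * Real.exp 1 * m / d) with hΛ
  set s := Real.sqrt ((m : ℝ) ^ (d - 1)) with hs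
  have hrd : 0 < Real.sqrt ((m : ℝ) / d) := Real.sqrt_pos.2 (by positivity)
  have e1 : Real.sqrt ((d : ℝ) * (m : ℝ) ^ d) = Real.sqrt ((m : ℝ) / d) * (d * s) := by
    have : (d : ℝ) * (m : ℝ) ^ d = ((m : ℝ) / d) * ((d : ℝ) ^ 2 * (m : ℝ) ^ (d - 1)) := by
      obtain ⟨e, rfl⟩ : ∃ e, d = e + 1 := ⟨d - 1, by omega⟩
      rw [Nat.add_sub_cancel, pow_succ]
      field_simp
    rw [this, Real.sqrt_mul (by positivity), Real.sqrt_mul (by positivity),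
      Real.sqrt_sq (by positivity)]
  rw [e1]
  have e2 : 60.9984 * (Real.sqrt ((m : ℝ) / d) * (d * s)) * (Real.sqrt Λ + 2.9599) /
      Real.sqrt ((m : ℝ) / d) = 60.9984 * (d * s) * (Real.sqrt Λ + 2.9599) := by
    field_simp
  rw [e2]
  have h1 : 0 ≤ (d : ℝ) * s := by positivity
  have h2 : 0 ≤ (d : ℝ) * s * Real.sqrt Λ := by positivity
  refine hmain.trans ?_
  nlinarith
end
end

section
/- Let n ≥ 1 be an integer and X a random variable binomially distributed with parameters n and 1/2. Let α ≥ 0 be such that n/2 + α is an integer and α ≤ n/2. Then Pr[X = n/2 + α] ≥ (1/(e^(1/6)·√(2π))) · n^(−1/2) · exp( −2α²/n − 4α³/n² ). -/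
open MeasureTheory ProbabilityTheory Real

lemma aux_entropy (x : ℝ) (hx0 : 0 ≤ x) (hx1 : x < 1) :
    (1 + x) * Real.log (1 + x) + (1 - x) * Real.log (1 - x) ≤ x ^ 2 + x ^ 3 := by
  have h1 : (1 + x) * Real.log (1 + x) ≤ x + x ^ 2 / 2 := by
    have h : Real.log (1 + x) ≤ Real.sinh (Real.log (1 + x)) :=
      Real.self_le_sinh_iff.2 (Real.log_nonneg (by linarith))
    rw [Real.sinh_log (by linarith)] at h
    have h2 := mul_le_mul_of_nonneg_left h (by linarith : 0 ≤ 1 + x)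
    have h3 : (1 + x) * ((1 + x - (1 + x)⁻¹) / 2) = x + x ^ 2 / 2 := by
      have : (1 + x) ≠ 0 := by linarith
      field_simp
      ring
    linarith
  have h2 : Real.log (1 - x) ≤ - x - x ^ 2 / 2 := by
    have h := Real.hasSum_pow_div_log_of_abs_lt_one (x := x) (by rw [abs_of_nonneg hx0]; exact hx1)
    have h3 := sum_le_hasSum (Finset.range 2) (fun i _ => by positivity) h
    simp [Finset.sum_range_succ] at h3
    norm_num at h3
    linarith
  have h4 := mul_le_mul_of_nonneg_left h2 (by linarith : 0 ≤ 1 - x)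
  have : 0 ≤ x ^ 3 := by positivity
  nlinarith

lemma aux_pow (n : ℕ) (hn : 1 ≤ n) :
    ((n : ℝ) / Real.exp 1) ^ n = Real.exp (n * Real.log n - n) := by
  have : (0 : ℝ) < n := by exact_mod_cast hn
  rw [div_pow, ← Real.exp_nat_mul, Real.exp_sub, mul_one, ← Real.log_pow,
    Real.exp_log (by positivity)]

lemma aux_lower (n : ℕ) (hn : 1 ≤ n) :
    Real.sqrt (2 * Real.pi * n) * Real.exp (n * Real.log n - n) ≤ (n.factorial : ℝ) := by
  rw [← aux_pow n hn]
  exact Stirling.le_factorial_stirling n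

lemma aux_upper (n : ℕ) (hn : 1 ≤ n) :
    (n.factorial : ℝ) ≤ Real.exp 1 * Real.sqrt n * Real.exp (n * Real.log n - n) := by
  have h0 : (0 : ℝ) < n := by exact_mod_cast hn
  have h := Stirling.stirlingSeq'_antitone (Nat.zero_le (n - 1))
  simp only [Function.comp, Nat.succ_eq_add_one, Nat.sub_add_cancel hn, zero_add,
    Stirling.stirlingSeq_one] at h
  rw [Stirling.stirlingSeq, aux_pow n hn, div_le_iff₀ (by positivity)] at h
  refine h.trans (le_of_eq ?_)
  rw [Real.sqrt_mul (by norm_num)]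
  have : Real.sqrt 2 ≠ 0 := by positivity
  field_simp

lemma aux_main (n k m : ℕ) (hkm : k + m = n) (hk : 1 ≤ k) (hm : 1 ≤ m) (α : ℝ) (hα0 : 0 ≤ α)
    (hj : (k : ℝ) = (n : ℝ) / 2 + α) :
    1 / (Real.exp (1 / 6) * Real.sqrt (2 * Real.pi)) * (Real.sqrt n)⁻¹ *
      Real.exp (-2 * α ^ 2 / n - 4 * α ^ 3 / (n : ℝ) ^ 2) ≤ (n.choose k : ℝ) / 2 ^ n := by
  have hk0 : (0 : ℝ) < k := by exact_mod_cast hk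
  have hm0 : (0 : ℝ) < m := by exact_mod_cast hm
  have hs : (k : ℝ) + m = n := by exact_mod_cast hkm
  have hn0 : (0 : ℝ) < n := by linarith
  have hmv : (m : ℝ) = n / 2 - α := by linarith
  have hn1 : 1 ≤ n := by omega
  have hfac : (n.choose k : ℝ) * (k.factorial * m.factorial) = n.factorial := by
    have := Nat.choose_mul_factorial_mul_factorial (n := n) (k := k) (by omega)
    rw [show n - k = m by omega] at this
    rw [← this]; push_cast; ring
  have hE : (k : ℝ) * Real.log k + m * Real.log m + n * Real.log 2 - n * Real.log n
      ≤ 2 * α ^ 2 / n + 4 * α ^ 3 / (n : ℝ) ^ 2 := by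
    have hx := aux_entropy (2 * α / n) (by positivity)
      (by rw [div_lt_one hn0]; linarith)
    have e1 : 1 + 2 * α / n = k / (n / 2) := by rw [hj]; field_simp
    have e2 : 1 - 2 * α / n = m / (n / 2) := by rw [hmv]; field_simp
    rw [e1, e2, Real.log_div hk0.ne' (by positivity), Real.log_div hm0.ne' (by positivity),
      Real.log_div hn0.ne' (by norm_num)] at hx
    have h2 := mul_le_mul_of_nonneg_left hx (by positivity : (0 : ℝ) ≤ n / 2)
    have e3 : (n : ℝ) / 2 * ((2 * α / n) ^ 2 + (2 * α / n) ^ 3)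
        = 2 * α ^ 2 / n + 4 * α ^ 3 / (n : ℝ) ^ 2 := by field_simp; ring
    have e4 : (n : ℝ) / 2 * (k / (n / 2) * (Real.log k - (Real.log n - Real.log 2)) +
        m / (n / 2) * (Real.log m - (Real.log n - Real.log 2))) =
        k * Real.log k + m * Real.log m + (k + m) * Real.log 2 - (k + m) * Real.log n := by
      field_simp; ring
    rw [e3, e4, hs] at h2
    exact h2
  have hF : (0 : ℝ) < k.factorial * m.factorial := by positivity
  have hsq : Real.sqrt k * Real.sqrt m ≤ n / 2 := by
    nlinarith [sq_nonneg (Real.sqrt k - Real.sqrt m), Real.sq_sqrt hk0.le, Real.sq_sqrt hm0.le]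
  have hup : (k.factorial * m.factorial : ℝ) ≤ Real.exp 2 * (n / 2) *
      Real.exp (k * Real.log k + m * Real.log m - n) := by
    calc (k.factorial * m.factorial : ℝ) ≤ _ := mul_le_mul (aux_upper k hk) (aux_upper m hm)
          (by positivity) (by positivity)
      _ = Real.exp 2 * (Real.sqrt k * Real.sqrt m) *
          Real.exp (k * Real.log k + m * Real.log m - n) := by
        rw [show (k : ℝ) * Real.log k + m * Real.log m - n =
          (k * Real.log k - k) + (m * Real.log m - m) by rw [← hs]; ring, Real.exp_add,
          show (2 : ℝ) = 1 + 1 by norm_num, Real.exp_add]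
        ring
      _ ≤ _ := by gcongr
  have hlow := aux_lower n hn1
  have hnum : Real.exp 2 ≤ 4 * Real.pi * Real.exp (1 / 6) := by
    have h1 : Real.exp 2 = Real.exp 1 * Real.exp 1 := by rw [← Real.exp_add]; norm_num
    have h2 := Real.exp_one_lt_d9
    have h3 := Real.pi_gt_three
    have h4 : 1 ≤ Real.exp (1 / 6) := Real.one_le_exp (by norm_num)
    have h5 := Real.exp_pos 1
    nlinarith
  rw [le_div_iff₀ (by positivity), ← mul_le_mul_iff_left₀ hF, hfac]
  refine le_trans ?_ hlow
  have h2n : (2 : ℝ) ^ n = Real.exp (n * Real.log 2) := by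
    rw [← Real.log_pow, Real.exp_log (by positivity)]
  rw [h2n]
  have hexp : Real.exp (-2 * α ^ 2 / n - 4 * α ^ 3 / (n : ℝ) ^ 2) * Real.exp (n * Real.log 2) *
      Real.exp (k * Real.log k + m * Real.log m - n) ≤ Real.exp (n * Real.log n - n) := by
    rw [← Real.exp_add, ← Real.exp_add]
    apply Real.exp_le_exp.2
    have : -2 * α ^ 2 / n = - (2 * α ^ 2 / n) := by ring
    rw [this]
    linarith
  have hc : 1 / (Real.exp (1 / 6) * Real.sqrt (2 * Real.pi)) * (Real.sqrt n)⁻¹ *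
      (Real.exp 2 * (n / 2)) ≤ Real.sqrt (2 * Real.pi * n) := by
    rw [Real.sqrt_mul (by positivity : 0 ≤ 2 * Real.pi) (n : ℝ)]
    have hp : 0 < Real.sqrt (2 * Real.pi) := by positivity
    have hq : 0 < Real.sqrt (n : ℝ) := by positivity
    have hp2 : Real.sqrt (2 * Real.pi) ^ 2 = 2 * Real.pi := Real.sq_sqrt (by positivity)
    have hq2 : Real.sqrt (n : ℝ) ^ 2 = n := Real.sq_sqrt hn0.le
    rw [show 1 / (Real.exp (1 / 6) * Real.sqrt (2 * Real.pi)) * (Real.sqrt n)⁻¹ *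
      (Real.exp 2 * (n / 2)) = (Real.exp 2 * (n / 2)) /
        (Real.exp (1 / 6) * Real.sqrt (2 * Real.pi) * Real.sqrt n) by field_simp,
      div_le_iff₀ (by positivity)]
    calc Real.exp 2 * (n / 2) ≤ (4 * Real.pi * Real.exp (1 / 6)) * (n / 2) := by gcongr
      _ = Real.exp (1 / 6) * (2 * Real.pi) * n := by ring
      _ = _ := by
        linear_combination (-(Real.exp (1 / 6) * n)) * hp2 -
          Real.exp (1 / 6) * Real.sqrt (2 * Real.pi) ^ 2 * hq2
  calc _ ≤ 1 / (Real.exp (1 / 6) * Real.sqrt (2 * Real.pi)) * (Real.sqrt n)⁻¹ *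
        Real.exp (-2 * α ^ 2 / n - 4 * α ^ 3 / (n : ℝ) ^ 2) * Real.exp (n * Real.log 2) *
        (Real.exp 2 * (n / 2) * Real.exp (k * Real.log k + m * Real.log m - n)) := by gcongr
    _ = (1 / (Real.exp (1 / 6) * Real.sqrt (2 * Real.pi)) * (Real.sqrt n)⁻¹ *
      (Real.exp 2 * (n / 2))) * (Real.exp (-2 * α ^ 2 / n - 4 * α ^ 3 / (n : ℝ) ^ 2) *
      Real.exp (n * Real.log 2) * Real.exp (k * Real.log k + m * Real.log m - n)) := by ring
    _ ≤ _ := mul_le_mul hc hexp (by positivity) (by positivity)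

lemma aux_edge (n : ℕ) (hn : 1 ≤ n) (α : ℝ) (hj : (n : ℝ) = (n : ℝ) / 2 + α) :
    1 / (Real.exp (1 / 6) * Real.sqrt (2 * Real.pi)) * (Real.sqrt n)⁻¹ *
      Real.exp (-2 * α ^ 2 / n - 4 * α ^ 3 / (n : ℝ) ^ 2) ≤ (n.choose n : ℝ) / 2 ^ n := by
  have hn1 : (1 : ℝ) ≤ n := by exact_mod_cast hn
  have hα : α = n / 2 := by linarith
  have e1 : -2 * α ^ 2 / n - 4 * α ^ 3 / (n : ℝ) ^ 2 = -n := by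
    rw [hα]; field_simp; ring
  rw [e1, Nat.choose_self, Nat.cast_one]
  have h1 : 1 / (Real.exp (1 / 6) * Real.sqrt (2 * Real.pi)) ≤ 1 := by
    rw [div_le_one (by positivity)]
    have h4 : 1 ≤ Real.exp (1 / 6) := Real.one_le_exp (by norm_num)
    have h5 : 1 ≤ Real.sqrt (2 * Real.pi) := Real.one_le_sqrt.2 (by linarith [Real.pi_gt_three])
    nlinarith
  have h2 : (Real.sqrt n)⁻¹ ≤ 1 := inv_le_one_of_one_le₀ (Real.one_le_sqrt.2 hn1)
  have h3 : Real.exp (-(n : ℝ)) ≤ 1 / 2 ^ n := by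
    rw [Real.exp_neg, one_div]
    apply inv_anti₀ (by positivity)
    have := Real.exp_one_gt_d9
    rw [← mul_one (n : ℝ), Real.exp_nat_mul]
    gcongr
    linarith
  calc _ ≤ 1 * 1 * Real.exp (-(n : ℝ)) := by gcongr
    _ ≤ _ := by simpa using h3

/-- Pointwise lower bound for the binomial distribution: if `X ~ Bin(n, 1/2)`, `α ≥ 0`,
`n/2 + α` is an integer and `α ≤ n/2`, then
`Pr[X = n/2 + α] ≥ (1/(e^(1/6)·√(2π)))·n^(−1/2)·exp(−2α²/n − 4α³/n²)`. -/
theorem binomial_point_lower {Ω : Type*} [MeasurableSpace Ω] (μ : Measure Ω)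
    [IsProbabilityMeasure μ] (n : ℕ) (hn : 1 ≤ n)
    (X : Ω → ℕ) (hXmeas : Measurable X)
    (hbin : ∀ j : ℕ, μ {ω | X ω = j} = (n.choose j : ENNReal) / 2 ^ n)
    (α : ℝ) (hα0 : 0 ≤ α) (hαint : ∃ j : ℕ, (j : ℝ) = (n : ℝ) / 2 + α)
    (hα2 : α ≤ (n : ℝ) / 2) :
    ENNReal.ofReal
        (1 / (Real.exp (1 / 6) * Real.sqrt (2 * Real.pi)) * (Real.sqrt n)⁻¹ *
          Real.exp (-2 * α ^ 2 / n - 4 * α ^ 3 / (n : ℝ) ^ 2))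
      ≤ μ {ω | ((X ω : ℝ)) = (n : ℝ) / 2 + α} := by
  obtain ⟨k, hk⟩ := hαint
  have hset : {ω | ((X ω : ℝ)) = (n : ℝ) / 2 + α} = {ω | X ω = k} := by
    ext ω
    simp only [Set.mem_ofPred_eq, ← hk, Nat.cast_inj]
  rw [hset, hbin k]
  have hn0 : (0 : ℝ) < n := by exact_mod_cast hn
  have hkn : k ≤ n := by
    have : (k : ℝ) ≤ n := by linarith
    exact_mod_cast this
  have hk1 : 1 ≤ k := by
    have : (0 : ℝ) < k := by linarith
    exact_mod_cast this
  have hkey : ENNReal.ofReal ((n.choose k : ℝ) / 2 ^ n) = (n.choose k : ENNReal) / 2 ^ n := by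
    rw [ENNReal.ofReal_div_of_pos (by positivity), ENNReal.ofReal_natCast,
      ENNReal.ofReal_pow (by norm_num)]
    norm_num
  rw [← hkey]
  apply ENNReal.ofReal_le_ofReal
  rcases hkn.lt_or_eq with h | h
  · exact aux_main n k (n - k) (by omega) hk1 (by omega) α hα0 hk
  · subst h
    exact aux_edge k hn α hk
end
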